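/- Let q ≥ 1 be real, let m = (m_1,…,m_ℓ) be a composition of n with all m_j ≥ 1, and let x = (x_1,…,x_n) be positive, m-compatible weights with x_1+⋯+x_n = 1. Let Ψ(q,x) be the unique stationary distribution of T_{S_n}(q,x). Then for all π, π' ∈ S_n with destd_m(π) = destd_m(π'), one has q^{inv(π)}·Ψ(q,x)_π = q^{inv(π')}·Ψ(q,x)_{π'}. -/

import Mathlib

/-!
STATEMENT 0: stationary distribution of the q-Tsetlin library on permutations.
-/

open scoped Classical

noncomputable section

namespace QTsetlin

variable {K : Type} [Field K]

/-- Number of inversions of a permutation (one-line notation `i ↦ π i`). -/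
def invCount {n : ℕ} (π : Equiv.Perm (Fin n)) : ℕ :=
  (Finset.univ.filter fun p : Fin n × Fin n => p.1 < p.2 ∧ π p.2 < π p.1).card

/-- Matrix (row convention: row `π` is `π · T_{k+1}`) of the Hecke generator `T_{k+1}`
(paper indexing), which swaps the (0-based) positions `k` and `k+1`. -/
def genMat (n : ℕ) (q : K) (k : ℕ) :
    Matrix (Equiv.Perm (Fin n)) (Equiv.Perm (Fin n)) K := fun π σ =>
  if h : k + 1 < n then
    if π ⟨k + 1, h⟩ < π ⟨k, Nat.lt_of_succ_lt h⟩ then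
      (if σ = π * Equiv.swap ⟨k, Nat.lt_of_succ_lt h⟩ ⟨k + 1, h⟩ then q else 0)
    else
      (if σ = π * Equiv.swap ⟨k, Nat.lt_of_succ_lt h⟩ ⟨k + 1, h⟩ then 1 else 0)
        + (if σ = π then q - 1 else 0)
  else 0

/-- Matrix of the product `T_k T_{k-1} ⋯ T_1` (paper indexing); `prodGen 0 = 1`. -/
def prodGen (n : ℕ) (q : K) : ℕ → Matrix (Equiv.Perm (Fin n)) (Equiv.Perm (Fin n)) K
  | 0 => 1
  | k + 1 => genMat n q k * prodGen n q k

/-- Matrix of the weighting operator `X_{S_n}(q,x)`: `π ↦ (x_{π_1}/q^{n-π_1}) · π`. -/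
def XSn (n : ℕ) (q : K) (x : Fin n → K) :
    Matrix (Equiv.Perm (Fin n)) (Equiv.Perm (Fin n)) K := fun π σ =>
  if σ = π then
    (if h : 0 < n then x (π ⟨0, h⟩) / q ^ (n - 1 - (π ⟨0, h⟩ : ℕ)) else 0)
  else 0

/-- Matrix of the q-Tsetlin library operator
`T_{S_n}(q,x) = (∑_{i=1}^n T_{i-1} ⋯ T_1) ∘ X_{S_n}(q,x)` on `ℂS_n` (row convention). -/
def TSn (n : ℕ) (q : K) (x : Fin n → K) :
    Matrix (Equiv.Perm (Fin n)) (Equiv.Perm (Fin n)) K :=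
  (∑ k ∈ Finset.range n, prodGen n q k) * XSn n q x

/-- `κ(b; x)`: sort the tuple `b` weakly decreasingly, obtaining `(b_1 ≥ ⋯ ≥ b_k)`, and form
`∑_i x_{b_i} q^{i + b_i - k - 1}` (1-based positions and values; here values are 0-based). -/
def kappa {n : ℕ} (q : K) (x : Fin n → K) (b : List (Fin n)) : K :=
  let s := b.insertionSort (fun a c => c ≤ a)
  ∑ i : Fin s.length, x (s.get i) * q ^ ((i : ℤ) + ((s.get i : ℕ) + 1) - s.length)

/-- `k` is the (0-based) position of a left-to-right minimum of `π`. -/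
def isLRM {n : ℕ} (π : Equiv.Perm (Fin n)) (k : Fin n) : Prop :=
  ∀ i : Fin n, i < k → π k < π i

/-- `p_k`: the smallest (0-based) position `i < k` with `π_i < π_k`. -/
def pMin {n : ℕ} (π : Equiv.Perm (Fin n)) (k : Fin n) : ℕ :=
  sInf {i : ℕ | ∃ h : i < n, (⟨i, h⟩ : Fin n) < k ∧ π ⟨i, h⟩ < π k}

/-- The tuple of values `(π_{p_k}, …, π_k)`. -/
def segTo {n : ℕ} (π : Equiv.Perm (Fin n)) (k : Fin n) : List (Fin n) :=
  ((List.finRange n).filter fun i : Fin n =>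
    decide (pMin π k ≤ (i : ℕ) ∧ (i : ℕ) ≤ (k : ℕ))).map π

/-- The tuple of values `(π_{p_k}, …, π_{k-1})`. -/
def segBefore {n : ℕ} (π : Equiv.Perm (Fin n)) (k : Fin n) : List (Fin n) :=
  ((List.finRange n).filter fun i : Fin n =>
    decide (pMin π k ≤ (i : ℕ) ∧ (i : ℕ) < (k : ℕ))).map π

/-- The tuple of values `(π_1, …, π_{k-1})` when `k` is the (0-based) position `k`
(i.e. the values at positions strictly before `k`). -/
def prefixVals {n : ℕ} (π : Equiv.Perm (Fin n)) (k : Fin n) : List (Fin n) :=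
  ((List.finRange n).filter fun i : Fin n => decide (i < k)).map π

/-- The claimed formula for the stationary distribution of the q-Tsetlin library on
permutations.  Note `List.finRange n` is the tuple of all values, whose weakly decreasing
rearrangement is the long permutation `w₀`, so `kappa q x (List.finRange n) = κ(w₀; x)`.
Products over `k` with `(k : ℕ) + 1 < n` correspond to the paper's `k = 1, …, n-1`. -/
def psiFormula (n : ℕ) (q : K) (x : Fin n → K) (π : Equiv.Perm (Fin n)) : K :=
  q ^ (-(invCount π : ℤ)) *
    ((∏ k ∈ Finset.univ.filter fun k : Fin n => (k : ℕ) + 1 < n ∧ isLRM π k,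
        kappa q x [π k]) *
      (∏ k ∈ Finset.univ.filter fun k : Fin n => (k : ℕ) + 1 < n ∧ ¬ isLRM π k,
        (kappa q x (segTo π k) - q⁻¹ * kappa q x (segBefore π k)))) /
    (∏ k ∈ Finset.univ.filter fun k : Fin n => (k : ℕ) + 1 < n,
      (kappa q x (List.finRange n) - q ^ (((k : ℕ) : ℤ) - (n : ℤ)) * kappa q x (prefixVals π k)))

/-- `Ψ` is a stationary distribution for the Markov chain with (row-convention) transition
matrix `T` and total rate `c`: it is a nonnegative row vector with entries summing to `1`
such that `Ψ · T = c · Ψ`. -/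
def IsStationary {P : Type} [Fintype P] (T : Matrix P P ℝ) (c : ℝ) (Ψ : P → ℝ) : Prop :=
  (∀ p, 0 ≤ Ψ p) ∧ (∑ p, Ψ p = 1) ∧ Matrix.vecMul Ψ T = c • Ψ


/-- `n_j = m_1 + ⋯ + m_j` (the first `j` parts of the composition, `j : ℕ`). -/
def nsum (l : ℕ) (m : Fin l → ℕ) (j : ℕ) : ℕ :=
  ∑ t ∈ Finset.univ.filter fun t : Fin l => (t : ℕ) < j, m t

/-- The (0-based) index `j` of the block `M_{j+1}` containing the 0-based value `v`. -/
def blockOf (l : ℕ) (m : Fin l → ℕ) (v : ℕ) : ℕ :=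
  sInf {j : ℕ | v < nsum l m (j + 1)}

/-- The weights `x` are `m`-compatible: `y_i = x_i / q^{n-i}` is constant on blocks. -/
def mCompatible (n l : ℕ) (m : Fin l → ℕ) (q : ℝ) (x : Fin n → ℝ) : Prop :=
  ∀ i i' : Fin n, blockOf l m (i : ℕ) = blockOf l m (i' : ℕ) →
    x i / q ^ (n - 1 - (i : ℕ)) = x i' / q ^ (n - 1 - (i' : ℕ))


section helpers

variable {n : ℕ}

/-- weight-ascent coefficient -/
def cA (q : ℝ) (P : Prop) : ℝ := if P then q else 1
def cB (q : ℝ) (P : Prop) : ℝ := if P then q - 1 else 0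

def Lop (q : ℝ) (i j : Fin n) (f : Equiv.Perm (Fin n) → ℝ) : Equiv.Perm (Fin n) → ℝ :=
  fun σ => cA q (σ⁻¹ i < σ⁻¹ j) * f (Equiv.swap i j * σ) + cB q (σ⁻¹ i < σ⁻¹ j) * f σ

def Rop (q : ℝ) (i j : Fin n) (f : Equiv.Perm (Fin n) → ℝ) : Equiv.Perm (Fin n) → ℝ :=
  fun σ => cA q (σ i < σ j) * f (σ * Equiv.swap i j) + cB q (σ i < σ j) * f σ

lemma vecMul_gen (q : ℝ) (k : ℕ) (h : k + 1 < n) (f : Equiv.Perm (Fin n) → ℝ) :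
    Matrix.vecMul f (genMat n q k) = Rop q ⟨k, Nat.lt_of_succ_lt h⟩ ⟨k + 1, h⟩ f := by
  funext σ
  set a : Fin n := ⟨k, Nat.lt_of_succ_lt h⟩ with ha
  set b : Fin n := ⟨k + 1, h⟩ with hb
  have hab : a ≠ b := by simp [ha, hb]
  have key : ∀ π, f π * genMat n q k π σ =
      (if π = σ * Equiv.swap a b then cA q (σ a < σ b) * f (σ * Equiv.swap a b) else 0)
      + (if π = σ then cB q (σ a < σ b) * f σ else 0) := by
    intro π
    have e1 : (σ = π * Equiv.swap a b) ↔ π = σ * Equiv.swap a b := by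
      constructor <;> rintro rfl <;> simp [mul_assoc]
    simp only [genMat, h, dif_pos, ← ha, ← hb, e1]
    have hne : σ a ≠ σ b := fun e => hab (σ.injective e)
    have hne' : σ ≠ σ * Equiv.swap a b := by
      intro e
      have := congrArg (fun g : Equiv.Perm (Fin n) => g a) e
      simp at this
      exact hab this
    by_cases h1 : π = σ * Equiv.swap a b
    · subst h1
      have := hne'.symm
      rcases lt_or_gt_of_ne hne with h2 | h2
      · simp [cA, cB, h2, h2.not_gt, hne', this, mul_comm]
      · simp [cA, cB, h2, h2.not_gt, hne', this, mul_comm]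
    · by_cases h3 : π = σ
      · subst h3
        rcases lt_or_gt_of_ne hne with h2 | h2
        · simp [cA, cB, h2, h2.not_gt, hne', mul_comm]
        · simp [cA, cB, h2, h2.not_gt, hne', mul_comm]
      · simp [h1, h3, Ne.symm h3, eq_comm (a := σ) (b := π)]
  simp only [Matrix.vecMul, dotProduct, key, Finset.sum_add_distrib, Finset.sum_ite_eq',
    Finset.sum_ite_eq, Finset.mem_univ, if_true, Rop]

lemma swap_lt_iff {i j : Fin n} (hij : (i : ℕ) + 1 = j) {a b : Fin n}
    (h1 : ¬ (a = i ∧ b = j)) (h2 : ¬ (a = j ∧ b = i)) :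
    Equiv.swap i j a < Equiv.swap i j b ↔ a < b := by
  rw [Equiv.swap_apply_def, Equiv.swap_apply_def]
  split_ifs <;> simp only [Fin.ext_iff, Fin.lt_def] at * <;> omega

lemma LR_comm (q : ℝ) {i j a b : Fin n} (hij : (i : ℕ) + 1 = j) (hab : (a : ℕ) + 1 = b)
    (f : Equiv.Perm (Fin n) → ℝ) : Lop q i j (Rop q a b f) = Rop q a b (Lop q i j f) := by
  have hij' : i < j := by rw [Fin.lt_def]; omega
  have hab' : a < b := by rw [Fin.lt_def]; omega
  funext σ
  by_cases hA : (σ a = i ∧ σ b = j) ∨ (σ a = j ∧ σ b = i)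
  · have key : ∀ τ : Equiv.Perm (Fin n), ((τ a = i ∧ τ b = j) ∨ (τ a = j ∧ τ b = i)) →
        (Equiv.swap i j * τ = τ * Equiv.swap a b ∧ (τ⁻¹ i < τ⁻¹ j ↔ τ a < τ b)) := by
      rintro τ (⟨rfl, rfl⟩ | ⟨rfl, rfl⟩)
      · refine ⟨?_, by simp [hab', hij']⟩
        rw [Equiv.mul_swap_eq_swap_mul]
      · refine ⟨?_, by simp [hab'.not_gt, hij'.not_gt]⟩
        rw [Equiv.mul_swap_eq_swap_mul, Equiv.swap_comm]
    have hLR : ∀ g, ∀ τ : Equiv.Perm (Fin n), ((τ a = i ∧ τ b = j) ∨ (τ a = j ∧ τ b = i)) →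
        Lop q i j g τ = Rop q a b g τ := by
      intro g τ hτ
      obtain ⟨e1, e2⟩ := key τ hτ
      simp only [Lop, Rop, e1, e2]
    have hA' : ((σ * Equiv.swap a b) a = i ∧ (σ * Equiv.swap a b) b = j) ∨
       ((σ * Equiv.swap a b) a = j ∧ (σ * Equiv.swap a b) b = i) := by
      simp only [Equiv.Perm.mul_apply, Equiv.swap_apply_left, Equiv.swap_apply_right]
      tauto
    rw [hLR _ σ hA]
    simp only [Rop]
    rw [hLR _ σ hA, hLR _ _ hA']
    simp only [Rop]
  · have e1 : (Equiv.swap i j * σ) a < (Equiv.swap i j * σ) b ↔ σ a < σ b := by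
      simp only [Equiv.Perm.mul_apply]
      exact swap_lt_iff hij (by tauto) (by tauto)
    have e2 : (σ * Equiv.swap a b)⁻¹ i < (σ * Equiv.swap a b)⁻¹ j ↔ σ⁻¹ i < σ⁻¹ j := by
      simp only [mul_inv_rev, Equiv.swap_inv, Equiv.Perm.mul_apply]
      refine swap_lt_iff hab ?_ ?_ <;>
      · rintro ⟨rfl, rfl⟩
        simp at hA
    simp only [Lop, Rop, e1, e2, mul_assoc]
    ring

lemma Lop_add (q : ℝ) (i j : Fin n) (f g : Equiv.Perm (Fin n) → ℝ) :
    Lop q i j (f + g) = Lop q i j f + Lop q i j g := by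
  funext σ; simp only [Lop, Pi.add_apply]; ring

lemma Lop_smul (q c : ℝ) (i j : Fin n) (f : Equiv.Perm (Fin n) → ℝ) :
    Lop q i j (c • f) = c • Lop q i j f := by
  funext σ; simp only [Lop, Pi.smul_apply, smul_eq_mul]; ring

lemma Lop_prodGen (q : ℝ) {i j : Fin n} (hij : (i : ℕ) + 1 = j) (k : ℕ) (hk : k < n) :
    ∀ f, Lop q i j (Matrix.vecMul f (prodGen n q k)) =
      Matrix.vecMul (Lop q i j f) (prodGen n q k) := by
  induction k with
  | zero => intro f; simp [prodGen]
  | succ k ih =>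
    intro f
    simp only [prodGen, ← Matrix.vecMul_vecMul]
    rw [ih (by omega), vecMul_gen q k hk, vecMul_gen q k hk, LR_comm q hij rfl]

lemma Lop_sum (q : ℝ) {i j : Fin n} (hij : (i : ℕ) + 1 = j) (k : ℕ) (hk : k ≤ n)
    (f : Equiv.Perm (Fin n) → ℝ) :
    Lop q i j (Matrix.vecMul f (∑ k ∈ Finset.range k, prodGen n q k)) =
      Matrix.vecMul (Lop q i j f) (∑ k ∈ Finset.range k, prodGen n q k) := by
  induction k with
  | zero => funext σ; simp [Lop]
  | succ k ih =>
    rw [Finset.sum_range_succ, Matrix.vecMul_add, Matrix.vecMul_add, Lop_add, ih (by omega),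
      Lop_prodGen q hij k (by omega)]

lemma vecMul_X (hn : 0 < n) (q : ℝ) (x : Fin n → ℝ) (f : Equiv.Perm (Fin n) → ℝ)
    (σ : Equiv.Perm (Fin n)) : Matrix.vecMul f (XSn n q x) σ =
      f σ * (x (σ ⟨0, hn⟩) / q ^ (n - 1 - (σ ⟨0, hn⟩ : ℕ))) := by
  simp [Matrix.vecMul, dotProduct, XSn, hn]

lemma Lop_TSn (hn : 0 < n) (q : ℝ) (x : Fin n → ℝ) {i j : Fin n} (hij : (i : ℕ) + 1 = j)
    (hy : x i / q ^ (n - 1 - (i : ℕ)) = x j / q ^ (n - 1 - (j : ℕ)))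
    (f : Equiv.Perm (Fin n) → ℝ) :
    Lop q i j (Matrix.vecMul f (TSn n q x)) = Matrix.vecMul (Lop q i j f) (TSn n q x) := by
  simp only [TSn, ← Matrix.vecMul_vecMul]
  rw [← Lop_sum q hij n le_rfl]
  generalize Matrix.vecMul f _ = g
  funext σ
  simp only [Lop, vecMul_X hn]
  have : x ((Equiv.swap i j * σ) ⟨0, hn⟩) / q ^ (n - 1 - ((Equiv.swap i j * σ) ⟨0, hn⟩ : ℕ))
     = x (σ ⟨0, hn⟩) / q ^ (n - 1 - (σ ⟨0, hn⟩ : ℕ)) := by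
    simp only [Equiv.Perm.mul_apply]
    rw [Equiv.swap_apply_def]
    split_ifs with h1 h2
    · rw [h1, hy]
    · rw [h2, hy]
    · rfl
  rw [this]; ring

/-- cycle -/
def cyc (n : ℕ) : ℕ → Equiv.Perm (Fin n)
  | 0 => 1
  | k + 1 => (if h : k + 1 < n then Equiv.swap ⟨k, Nat.lt_of_succ_lt h⟩ ⟨k + 1, h⟩
      else (1 : Equiv.Perm (Fin n))) * cyc n k

lemma genMat_nonneg {q : ℝ} (hq : 1 ≤ q) (k : ℕ) (π σ : Equiv.Perm (Fin n)) :
    0 ≤ genMat n q k π σ := by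
  unfold genMat
  split_ifs <;> first | linarith | simp

lemma prodGen_nonneg {q : ℝ} (hq : 1 ≤ q) (k : ℕ) :
    ∀ π σ : Equiv.Perm (Fin n), 0 ≤ prodGen n q k π σ := by
  induction k with
  | zero => intro π σ; simp only [prodGen, Matrix.one_apply]; split_ifs <;> simp
  | succ k ih =>
    intro π σ
    simp only [prodGen, Matrix.mul_apply]
    exact Finset.sum_nonneg fun τ _ => mul_nonneg (genMat_nonneg hq k π τ) (ih τ σ)

lemma prodGen_pos {q : ℝ} (hq : 1 ≤ q) (k : ℕ) (hk : k < n) :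
    ∀ π : Equiv.Perm (Fin n), 0 < prodGen n q k π (π * cyc n k) := by
  induction k with
  | zero =>
    intro π
    have e : cyc n 0 = 1 := rfl
    rw [e, mul_one, prodGen, Matrix.one_apply_eq]
    exact one_pos
  | succ k ih =>
    intro π
    simp only [prodGen, Matrix.mul_apply, cyc, hk, dif_pos]
    refine Finset.sum_pos' (fun τ _ => mul_nonneg (genMat_nonneg hq k π τ)
      (prodGen_nonneg hq k τ _)) ⟨π * Equiv.swap ⟨k, Nat.lt_of_succ_lt hk⟩ ⟨k + 1, hk⟩,
        Finset.mem_univ _, mul_pos ?_ ?_⟩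
    · simp only [genMat, hk, dif_pos]
      split_ifs <;> first | linarith | simp_all
    · rw [← mul_assoc]; exact ih (by omega) _

lemma closure_all (hn : 0 < n) (H : Subgroup (Equiv.Perm (Fin n)))
    (h : ∀ k, k < n → cyc n k ∈ H) : H = ⊤ := by
  obtain ⟨n, rfl⟩ := Nat.exists_eq_add_one_of_ne_zero hn.ne'
  rw [eq_top_iff]
  have h2 := Equiv.Perm.mclosure_swap_castSucc_succ n
  have h3 : Submonoid.closure (Set.range fun i : Fin n => Equiv.swap i.castSucc i.succ)
      ≤ H.toSubmonoid := by
    rw [Submonoid.closure_le]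
    rintro _ ⟨i, rfl⟩
    have hi := i.2
    have a1 := h i (by omega)
    have a2 := h (i + 1) (by omega)
    have : (i : ℕ) + 1 < n + 1 := by omega
    simp only [cyc, this, dif_pos] at a2
    exact (H.mul_mem_cancel_right a1).1 a2
  rw [h2] at h3
  intro g _
  exact h3 (Submonoid.mem_top g)

lemma zero_of_zero (hn : 0 < n) {q : ℝ} (hq : 1 ≤ q) (x : Fin n → ℝ) (hx : ∀ i, 0 < x i)
    (c : ℝ) (f : Equiv.Perm (Fin n) → ℝ) (hf : ∀ p, 0 ≤ f p)
    (hT : Matrix.vecMul f (TSn n q x) = c • f) (σ : Equiv.Perm (Fin n)) (hσ : f σ = 0) :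
    f = 0 := by
  have hstep : ∀ k, k < n → ∀ τ, f τ = 0 → f (τ * (cyc n k)⁻¹) = 0 := by
    intro k hk τ hτ
    have h1 := congrFun hT τ
    simp only [TSn, ← Matrix.vecMul_vecMul, Pi.smul_apply, hτ, smul_zero, vecMul_X hn] at h1
    have hy : 0 < x (τ ⟨0, hn⟩) / q ^ (n - 1 - (τ ⟨0, hn⟩ : ℕ)) :=
      div_pos (hx _) (pow_pos (by linarith) _)
    have h2 := (mul_eq_zero.1 h1).resolve_right hy.ne'
    simp only [Matrix.vecMul, dotProduct, Matrix.sum_apply] at h2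
    rw [Finset.sum_eq_zero_iff_of_nonneg (fun π _ => mul_nonneg (hf π)
      (Finset.sum_nonneg fun k _ => prodGen_nonneg hq k π τ))] at h2
    have h3 := h2 (τ * (cyc n k)⁻¹) (Finset.mem_univ _)
    refine (mul_eq_zero.1 h3).resolve_right (ne_of_gt ?_)
    refine Finset.sum_pos' (fun k _ => prodGen_nonneg hq k _ τ)
      ⟨k, Finset.mem_range.2 hk, ?_⟩
    have := prodGen_pos hq k hk (τ * (cyc n k)⁻¹)
    simpa using this
  let H : Subgroup (Equiv.Perm (Fin n)) :=
    { carrier := {g | ∀ τ, f τ = 0 ↔ f (τ * g) = 0}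
      mul_mem' := by
        intro a b ha hb τ
        rw [ha, hb, mul_assoc]
      one_mem' := by intro τ; simp
      inv_mem' := by
        intro a ha τ
        rw [ha (τ * a⁻¹)]; simp }
  have hH : H = ⊤ := by
    apply closure_all hn
    intro k hk
    have hp : ∀ m : ℕ, ∀ τ, f τ = 0 → f (τ * ((cyc n k)⁻¹) ^ m) = 0 := by
      intro m
      induction m with
      | zero => intro τ h; simpa using h
      | succ m ih => intro τ h; rw [pow_succ, ← mul_assoc]; exact hstep k hk _ (ih τ h)
    intro τ
    constructor
    · intro h
      have := hp (orderOf ((cyc n k)⁻¹) - 1) τ h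
      have e : ((cyc n k)⁻¹) ^ (orderOf ((cyc n k)⁻¹) - 1) = cyc n k := by
        have h0 := orderOf_pos ((cyc n k)⁻¹)
        have h1 := pow_orderOf_eq_one ((cyc n k)⁻¹)
        rw [← Nat.sub_add_cancel h0, pow_succ] at h1
        simpa using mul_inv_eq_one.1 h1
      rwa [e] at this
    · intro h
      have := hstep k hk _ h
      simpa using this
  funext τ
  have : σ⁻¹ * τ ∈ H := by rw [hH]; trivial
  have := (this σ).1 hσ
  simpa using this

lemma unique_prop (hn : 0 < n) {q : ℝ} (hq : 1 ≤ q) (x : Fin n → ℝ) (hx : ∀ i, 0 < x i)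
    (c : ℝ) (f g : Equiv.Perm (Fin n) → ℝ) (hf : ∀ p, 0 ≤ f p) (hf0 : ∑ p, f p = 1)
    (hfT : Matrix.vecMul f (TSn n q x) = c • f)
    (hgT : Matrix.vecMul g (TSn n q x) = c • g) : ∃ t : ℝ, g = t • f := by
  have hpos : ∀ p, 0 < f p := by
    intro p
    refine lt_of_le_of_ne (hf p) fun h => ?_
    have := zero_of_zero hn hq x hx c f hf hfT p h.symm
    simp [this] at hf0
  obtain ⟨p, -, hp⟩ := Finset.exists_min_image Finset.univ (fun p => g p / f p) ⟨1, Finset.mem_univ _⟩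
  refine ⟨g p / f p, ?_⟩
  have := zero_of_zero hn hq x hx c (g - (g p / f p) • f) ?_ ?_ p ?_
  · exact sub_eq_zero.1 this
  · intro r
    have h1 := hp r (Finset.mem_univ _)
    rw [le_div_iff₀ (hpos r)] at h1
    simp only [Pi.sub_apply, Pi.smul_apply, smul_eq_mul]
    linarith
  · rw [Matrix.sub_vecMul, Matrix.smul_vecMul, hfT, hgT, smul_sub, smul_comm]
  · simp [(hpos p).ne']

lemma sum_Lop (q : ℝ) {i j : Fin n} (hij : (i : ℕ) + 1 = j) (f : Equiv.Perm (Fin n) → ℝ) :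
    ∑ σ, Lop q i j f σ = q * ∑ σ, f σ := by
  have hne : i ≠ j := by intro h; rw [Fin.ext_iff] at h; omega
  simp only [Lop, Finset.sum_add_distrib]
  rw [← Equiv.sum_comp (Equiv.mulLeft (Equiv.swap i j))
    (fun σ : Equiv.Perm (Fin n) => cA q (σ⁻¹ i < σ⁻¹ j) * f (Equiv.swap i j * σ)),
    ← Finset.sum_add_distrib, Finset.mul_sum]
  refine Finset.sum_congr rfl fun σ _ => ?_
  have : σ⁻¹ i ≠ σ⁻¹ j := fun h => hne (σ⁻¹.injective h)
  simp only [Equiv.coe_mulLeft, Equiv.swap_mul_self_mul, mul_inv_rev, Equiv.swap_inv,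
    Equiv.Perm.mul_apply, Equiv.swap_apply_left, Equiv.swap_apply_right]
  rcases lt_or_gt_of_ne this with h | h
  · simp only [cA, cB, h, h.not_gt, if_true, if_false]; ring
  · simp only [cA, cB, h, h.not_gt, if_true, if_false]; ring

lemma inv_swap {i j : Fin n} (hij : (i : ℕ) + 1 = j) (σ : Equiv.Perm (Fin n))
    (h : σ⁻¹ i < σ⁻¹ j) : invCount (Equiv.swap i j * σ) = invCount σ + 1 := by
  have hij' : i < j := by rw [Fin.lt_def]; omega
  unfold invCount
  have hnot : (σ⁻¹ i, σ⁻¹ j) ∉ (Finset.univ.filter fun p : Fin n × Fin n =>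
      p.1 < p.2 ∧ σ p.2 < σ p.1) := by
    simp [hij'.le]
  rw [← Finset.card_insert_of_notMem hnot]
  congr 1
  ext ⟨a, b⟩
  rw [Finset.mem_insert, Finset.mem_filter, Finset.mem_filter]
  simp only [Finset.mem_univ, true_and, Prod.mk.injEq, Equiv.Perm.mul_apply]
  by_cases h1 : σ b = i ∧ σ a = j
  · obtain ⟨rfl, rfl⟩ := h1
    simp only [Equiv.Perm.coe_inv, Equiv.symm_apply_apply] at h ⊢
    constructor
    · rintro ⟨h3, -⟩; exact absurd h h3.not_gt
    · rintro (⟨h3, h4⟩ | ⟨h3, -⟩)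
      · rw [h3] at h; exact absurd h (by simp)
      · exact absurd h h3.not_gt
  · by_cases h2 : σ b = j ∧ σ a = i
    · obtain ⟨rfl, rfl⟩ := h2
      simp only [Equiv.Perm.coe_inv, Equiv.symm_apply_apply] at h ⊢
      simp [h, hij']
    · rw [swap_lt_iff hij h1 h2]
      constructor
      · exact Or.inr
      · rintro (⟨rfl, rfl⟩ | h3)
        · simp at h2
        · exact h3

lemma step_inv (hn : 0 < n) {q : ℝ} (hq : 1 ≤ q) (x : Fin n → ℝ) (hx : ∀ i, 0 < x i)
    (c : ℝ) (f : Equiv.Perm (Fin n) → ℝ) (hΨ : IsStationary (TSn n q x) c f)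
    {i j : Fin n} (hij : (i : ℕ) + 1 = j)
    (hy : x i / q ^ (n - 1 - (i : ℕ)) = x j / q ^ (n - 1 - (j : ℕ)))
    (σ : Equiv.Perm (Fin n)) :
    q ^ invCount (Equiv.swap i j * σ) * f (Equiv.swap i j * σ) = q ^ invCount σ * f σ := by
  obtain ⟨h1, h2, h3⟩ := hΨ
  obtain ⟨t, ht⟩ := unique_prop hn hq x hx c f (Lop q i j f) h1 h2 h3
    (by rw [← Lop_TSn hn q x hij hy, h3, Lop_smul])
  have hs := sum_Lop q hij f
  rw [ht] at hs
  simp only [Pi.smul_apply, smul_eq_mul, ← Finset.mul_sum, h2, mul_one] at hs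
  have main : ∀ τ : Equiv.Perm (Fin n), τ⁻¹ i < τ⁻¹ j →
      q ^ invCount (Equiv.swap i j * τ) * f (Equiv.swap i j * τ) = q ^ invCount τ * f τ := by
    intro τ h
    have h5 := congrFun ht (Equiv.swap i j * τ)
    simp only [Lop, Equiv.swap_mul_self_mul, mul_inv_rev, Equiv.swap_inv,
      Equiv.Perm.mul_apply, Equiv.swap_apply_left, Equiv.swap_apply_right, cA, cB, h.not_gt,
      if_false, Pi.smul_apply, smul_eq_mul, one_mul, zero_mul, add_zero] at h5
    rw [inv_swap hij τ h, h5, hs, pow_succ, mul_assoc]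
  have hne : i ≠ j := by intro h; rw [Fin.ext_iff] at h; omega
  have : σ⁻¹ i ≠ σ⁻¹ j := fun h => hne (σ⁻¹.injective h)
  rcases lt_or_gt_of_ne this with h | h
  · exact main σ h
  · have := main (Equiv.swap i j * σ) (by simpa using h)
    rw [Equiv.swap_mul_self_mul] at this
    exact this.symm

lemma blockOf_mono {l : ℕ} (m : Fin l → ℕ) (hmn : ∑ j, m j = n) {v w : ℕ} (h : v ≤ w)
    (hw : w < n) : blockOf l m v ≤ blockOf l m w := by
  apply Nat.sInf_le
  have hne : {j : ℕ | w < nsum l m (j + 1)}.Nonempty := by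
    refine ⟨l, ?_⟩
    have : nsum l m (l + 1) = n := by
      rw [← hmn, nsum, Finset.filter_true_of_mem]
      intro t _; have := t.2; omega
    simp only [Set.mem_ofPred_eq, this, hw]
  have := Nat.sInf_mem hne
  simp only [Set.mem_ofPred_eq] at *
  exact lt_of_le_of_lt h this

lemma block_swaps (B : Fin n → ℕ) (hB : Monotone B) (H : Subgroup (Equiv.Perm (Fin n)))
    (hH : ∀ i j : Fin n, (i : ℕ) + 1 = j → B i = B j → Equiv.swap i j ∈ H) :
    ∀ d : ℕ, ∀ i j : Fin n, (i : ℕ) + d = j → B i = B j → Equiv.swap i j ∈ H := by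
  intro d
  induction d with
  | zero =>
    intro i j h _
    have : i = j := Fin.ext (by omega)
    subst this
    rw [Equiv.swap_self]; exact H.one_mem
  | succ d ih =>
    intro i j h hb
    by_cases hd : d = 0
    · exact hH i j (by omega) hb
    have hj := j.2
    let k : Fin n := ⟨i + d, by omega⟩
    have hik : i ≤ k := by rw [Fin.le_def]; simp [k]
    have hkj : k ≤ j := by rw [Fin.le_def]; simp only [k]; omega
    have b1 := hB hik
    have b2 := hB hkj
    have s1 := ih i k rfl (by omega)
    have s2 := hH k j (by simp only [k]; omega) (by omega)
    have e : Equiv.swap k j * Equiv.swap i k * Equiv.swap k j = Equiv.swap i j := by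
      rw [Equiv.swap_mul_swap_mul_swap, Equiv.swap_comm]
      · intro e; rw [Fin.ext_iff] at e; simp only [k] at e; omega
      · intro e; rw [Fin.ext_iff] at e; omega
    rw [← e]
    exact H.mul_mem (H.mul_mem s2 s1) s2

lemma block_perm (B : Fin n → ℕ) (H : Subgroup (Equiv.Perm (Fin n)))
    (hH : ∀ i j : Fin n, B i = B j → Equiv.swap i j ∈ H) :
    ∀ N : ℕ, ∀ g : Equiv.Perm (Fin n), g.support.card < N → (∀ i, B (g i) = B i) → g ∈ H := by
  intro N
  induction N with
  | zero => intro g h; omega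
  | succ N ih =>
    intro g hg hb
    by_cases h1 : g = 1
    · rw [h1]; exact H.one_mem
    obtain ⟨i, hi⟩ : ∃ i, g i ≠ i := by
      by_contra! hc
      exact h1 (Equiv.ext hc)
    have hs := hH i (g i) (hb i).symm
    rw [← H.mul_mem_cancel_left hs]
    apply ih
    · have := Equiv.Perm.card_support_swap_mul hi
      omega
    · intro a
      rw [Equiv.Perm.mul_apply, ← hb a, Equiv.swap_apply_def]
      split_ifs with h2 h3
      · rw [h2, hb]
      · rw [h3, hb]
      · rfl

end helpers

/-- For real `q ≥ 1`, a composition `m` of `n` with positive parts and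
positive `m`-compatible weights `x` summing to `1`, any stationary distribution `Ψ` of
`T_{S_n}(q,x)` satisfies `q^{inv(π)} Ψ_π = q^{inv(π')} Ψ_{π'}` whenever
`destd_m(π) = destd_m(π')` (i.e. `π` and `π'` become the same word after replacing every
value by the index of its block). -/
theorem qTsetlin_perm_destd_invariance (n l : ℕ) (hn : 1 ≤ n) (q : ℝ) (hq : 1 ≤ q)
    (m : Fin l → ℕ) (hm : ∀ j, 1 ≤ m j) (hmn : ∑ j, m j = n)
    (x : Fin n → ℝ) (hx : ∀ i, 0 < x i) (hx1 : ∑ i, x i = 1)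
    (hcompat : mCompatible n l m q x)
    (Ψ : Equiv.Perm (Fin n) → ℝ) (hΨ : IsStationary (TSn n q x) (∑ i, x i) Ψ)
    (π π' : Equiv.Perm (Fin n))
    (hdestd : ∀ p : Fin n, blockOf l m ((π p : ℕ)) = blockOf l m ((π' p : ℕ))) :
    q ^ invCount π * Ψ π = q ^ invCount π' * Ψ π' := by
  have hn' : 0 < n := hn
  let F : Equiv.Perm (Fin n) → ℝ := fun σ => q ^ invCount σ * Ψ σ
  let H : Subgroup (Equiv.Perm (Fin n)) :=
    { carrier := {g | ∀ τ, F (g * τ) = F τ}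
      mul_mem' := by
        intro a b ha hb τ
        rw [mul_assoc, ha, hb]
      one_mem' := by intro τ; simp
      inv_mem' := by
        intro a ha τ
        rw [← ha (a⁻¹ * τ)]; simp }
  let B : Fin n → ℕ := fun v => blockOf l m v
  have hB : Monotone B := fun v w h => blockOf_mono m hmn (Fin.le_def.1 h) w.2
  have hadj : ∀ i j : Fin n, (i : ℕ) + 1 = j → B i = B j → Equiv.swap i j ∈ H := by
    intro i j hij hb τ
    exact step_inv hn' hq x hx _ Ψ hΨ hij (hcompat i j hb) τ
  have hsw : ∀ i j : Fin n, B i = B j → Equiv.swap i j ∈ H := by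
    intro i j hb
    rcases le_total i j with h | h
    · exact block_swaps B hB H hadj (j - i : ℕ) i j (by rw [Fin.le_def] at h; omega) hb
    · rw [Equiv.swap_comm]
      exact block_swaps B hB H hadj (i - j : ℕ) j i (by rw [Fin.le_def] at h; omega) hb.symm
  have hg : π * π'⁻¹ ∈ H := by
    refine block_perm B H hsw _ _ (Nat.lt_succ_self _) ?_
    intro i
    have := hdestd (π'⁻¹ i)
    simpa [B] using this
  have := hg π'
  simpa [F] using this

end QTsetlin
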